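/- There exists exactly one stream y : Stream' ℕ satisfying y = (SCons 0 (SCons 1 y)) ⊕ (SCons 0 y), where ⊕ is pointwise addition of streams; moreover this unique stream is the stream of Fibonacci numbers: y.get n = Nat.fib n for all n (hence it coincides with the unique solution of x = SCons 0 ((SCons 1 x) ⊕ x)). -/

import Mathlib

open Stream'

/-- Pointwise addition of streams. -/
def sadd (xs ys : Stream' ℕ) : Stream' ℕ := fun n => xs.get n + ys.get n

infixl:65 " ⊕ " => sadd

theorem get_sadd (xs ys : Stream' ℕ) (n : ℕ) : (xs ⊕ ys).get n = xs.get n + ys.get n :=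
  rfl

theorem eq_cons_cons_sadd_cons_iff {a b c : ℕ} {y : Stream' ℕ} :
    y = Stream'.cons a (Stream'.cons b y) ⊕ Stream'.cons c y ↔
      y.get 0 = a + c ∧ y.get 1 = b + y.get 0 ∧
        ∀ n, y.get (n + 2) = y.get n + y.get (n + 1) := by
  constructor
  · intro h
    have get_eq (n : ℕ) :
        y.get n = (Stream'.cons a (Stream'.cons b y)).get n + (Stream'.cons c y).get n := by
      rw [← get_sadd, ← h]
    exact ⟨get_eq 0, get_eq 1, fun n => get_eq (n + 2)⟩
  · rintro ⟨get_zero, get_one, get_add_two⟩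
    refine Stream'.ext fun n => ?_
    match n with
    | 0 => exact get_zero
    | 1 => exact get_one
    | n + 2 => exact get_add_two n

theorem eq_of_add_two_eq_add {M : Type*} [Add M] {u v : ℕ → M}
    (h_zero : u 0 = v 0) (h_one : u 1 = v 1)
    (hu : ∀ n, u (n + 2) = u n + u (n + 1)) (hv : ∀ n, v (n + 2) = v n + v (n + 1)) :
    u = v := by
  funext n
  induction n using Nat.twoStepInduction with
  | zero => exact h_zero
  | one => exact h_one
  | more n ih ih_succ => rw [hu, hv, ih, ih_succ]

/-- The stream of Fibonacci numbers, starting with `Nat.fib 0 = 0`: the solution of the stream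
equation `y = (0 :: 1 :: y) ⊕ (0 :: y)`. -/
def fibStream : Stream' ℕ := Nat.fib

theorem get_fibStream (n : ℕ) : fibStream.get n = Nat.fib n :=
  rfl

theorem fibStream_eq_cons_cons_sadd_cons :
    fibStream = Stream'.cons 0 (Stream'.cons 1 fibStream) ⊕ Stream'.cons 0 fibStream :=
  eq_cons_cons_sadd_cons_iff.2 ⟨Nat.fib_zero, Nat.fib_one, fun _ => Nat.fib_add_two⟩

theorem eq_fibStream_of_eq_cons_cons_sadd_cons {y : Stream' ℕ}
    (hy : y = Stream'.cons 0 (Stream'.cons 1 y) ⊕ Stream'.cons 0 y) : y = fibStream := by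
  obtain ⟨get_zero, get_one, get_add_two⟩ := eq_cons_cons_sadd_cons_iff.1 hy
  rw [get_zero] at get_one
  exact eq_of_add_two_eq_add get_zero get_one get_add_two fun _ => Nat.fib_add_two

theorem stmt_5 :
    (∃! y : Stream' ℕ, y = (Stream'.cons 0 (Stream'.cons 1 y)) ⊕ (Stream'.cons 0 y)) ∧
    (∀ y : Stream' ℕ, y = (Stream'.cons 0 (Stream'.cons 1 y)) ⊕ (Stream'.cons 0 y) →
      ∀ n, y.get n = Nat.fib n) := by
  refine ⟨⟨fibStream, fibStream_eq_cons_cons_sadd_cons, fun _ hy =>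
    eq_fibStream_of_eq_cons_cons_sadd_cons hy⟩, fun y hy n => ?_⟩
  rw [eq_fibStream_of_eq_cons_cons_sadd_cons hy, get_fibStream]
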